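/- For all complex numbers q and x with |q| < 1 and |x| < 1, one has Σ_{n=1}^∞ Σ_{c=0}^n (x;q)_n · x^{n−1} · q^{c²} · x^{2c} · [n choose c]_q = Σ_{n=0}^∞ χ₂₀⁽¹⁾(n) · q^{(n²−1)/40} · x^{(n−1)/2}, where on the right-hand side only n ≡ 1, 9, 11, 19 (mod 20) contribute, so that all exponents (n²−1)/40 and (n−1)/2 are nonnegative integers, and both series converge absolutely. -/

import Mathlib

/-- The finite q-Pochhammer symbol `(x;q)_n = ∏_{i=1}^n (1 - x q^{i-1})`. -/
noncomputable def qPoch (q x : ℂ) (n : ℕ) : ℂ := ∏ i ∈ Finset.range n, (1 - x * q ^ i)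

/-- The Gaussian binomial coefficient `[n choose c]_q`. -/
noncomputable def qBinom (q : ℂ) (n c : ℕ) : ℂ :=
  if c ≤ n then qPoch q q n / (qPoch q q c * qPoch q q (n - c)) else 0

/-- The 20-periodic function `χ₂₀⁽¹⁾`. -/
def chi20_1 (n : ℕ) : ℤ :=
  if n % 20 = 1 ∨ n % 20 = 19 then 1
  else if n % 20 = 9 ∨ n % 20 = 11 then -1
  else 0

/-!
As functions of `x` on the open unit disc, both sides of the identity satisfy the functional
equation `f x = 1 - q ^ 2 * x ^ 4 - q ^ 3 * x ^ 5 * f (x * q)`.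
For the series in `χ₂₀⁽¹⁾` this is the shift `n ↦ n + 10`. For the double series, put
`F n a = ∑ c, q ^ (c ^ 2) * a ^ c * [n choose c]_q`. The two `q`-Pascal rules give two recurrences
for `F`, and eliminating between them at `a = x ^ 2` turns
`(1 - x) * (f x + q ^ 3 * x ^ 5 * f (x * q))` into a telescoping sum. The difference `D` of the two
sides therefore satisfies `D x = -q ^ 3 * x ^ 5 * D (x * q)`; as `D` is bounded on closed discs of
radius less than one, iterating this gives `D = 0`.
-/

open Filter Topology

lemma not_isOfFinOrder_of_norm_lt_one {K : Type*} [NormedDivisionRing K] {q : K}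
    (hq : ‖q‖ < 1) : ¬IsOfFinOrder q :=
  fun h ↦ hq.ne h.norm_eq_one

lemma one_sub_pow_succ_ne_zero {R : Type*} [Ring R] {q : R} (hq : ¬IsOfFinOrder q) (n : ℕ) :
    1 - q ^ (n + 1) ≠ 0 :=
  fun h ↦ hq (isOfFinOrder_iff_pow_eq_one.mpr ⟨n + 1, n.succ_pos, (sub_eq_zero.mp h).symm⟩)

lemma prod_one_add_mul_pow_le_exp {R r : ℝ} (hR : 0 ≤ R) (hr : 0 ≤ r) (hr1 : r < 1) (n : ℕ) :
    ∏ i ∈ Finset.range n, (1 + R * r ^ i) ≤ Real.exp (R / (1 - r)) := by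
  have hsum : ∑ i ∈ Finset.range n, R * r ^ i ≤ R / (1 - r) :=
    sum_le_hasSum _ (fun i _ ↦ by positivity) ((hasSum_geometric_of_lt_one hr hr1).mul_left R)
  exact (Real.prod_one_add_le_exp_sum _ fun i ↦ by positivity).trans (Real.exp_le_exp.mpr hsum)

lemma tsum_eq_of_eq_sub_succ {E : Type*} [AddCommGroup E] [TopologicalSpace E]
    [IsTopologicalAddGroup E] [T2Space E] {f u : ℕ → E} (hf : Summable f)
    (h : ∀ n, f n = u n - u (n + 1)) (hu : Tendsto u atTop (𝓝 0)) : ∑' n, f n = u 0 := by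
  refine tendsto_nhds_unique hf.hasSum.tendsto_sum_nat ?_
  simp only [h, Finset.sum_range_sub']
  simpa using tendsto_const_nhds.sub hu

lemma hasSum_pow_half {K : Type*} [NormedDivisionRing K] {r : K} (hr : ‖r‖ < 1) :
    HasSum (fun n : ℕ ↦ r ^ (n / 2)) ((1 - r)⁻¹ + (1 - r)⁻¹) := by
  have hgeom := hasSum_geometric_of_norm_lt_one hr
  refine HasSum.even_add_odd ?_ ?_
  · simpa using hgeom
  · simpa [Nat.mul_add_div] using hgeom

lemma eq_zero_of_norm_le_mul_norm_comp {α E : Type*} [NormedAddCommGroup E] {s : Set α}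
    {φ : α → α} {f : α → E} {r M : ℝ} (hr : 0 ≤ r) (hr1 : r < 1) (hφ : Set.MapsTo φ s s)
    (hM : ∀ y ∈ s, ‖f y‖ ≤ M) (h : ∀ y ∈ s, ‖f y‖ ≤ r * ‖f (φ y)‖) : ∀ y ∈ s, f y = 0 := by
  have hiter (k : ℕ) : ∀ y ∈ s, ‖f y‖ ≤ r ^ k * M := by
    induction k with
    | zero => simpa using hM
    | succ k ih =>
      intro y hy
      calc ‖f y‖ ≤ r * ‖f (φ y)‖ := h y hy
        _ ≤ r * (r ^ k * M) := by gcongr; exact ih _ (hφ hy)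
        _ = r ^ (k + 1) * M := by ring
  intro y hy
  have hlim : Tendsto (fun k ↦ r ^ k * M) atTop (𝓝 0) := by
    simpa using (tendsto_pow_atTop_nhds_zero_of_lt_one hr hr1).mul_const M
  exact norm_le_zero_iff.mp (ge_of_tendsto' hlim fun k ↦ hiter k y hy)

section Pochhammer

variable {q : ℂ}

@[simp]
lemma qPoch_zero (q x : ℂ) : qPoch q x 0 = 1 := by simp [qPoch]

lemma qPoch_succ (q x : ℂ) (n : ℕ) : qPoch q x (n + 1) = qPoch q x n * (1 - x * q ^ n) :=
  Finset.prod_range_succ _ n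

lemma qPoch_succ' (q x : ℂ) (n : ℕ) : qPoch q x (n + 1) = (1 - x) * qPoch q (x * q) n := by
  simp only [qPoch, Finset.prod_range_succ', pow_zero, mul_one, mul_comm (1 - x), pow_succ',
    mul_assoc]

lemma qPoch_self_succ (q : ℂ) (n : ℕ) : qPoch q q (n + 1) = qPoch q q n * (1 - q ^ (n + 1)) := by
  rw [qPoch_succ, pow_succ']

lemma qPoch_self_ne_zero (hq : ¬IsOfFinOrder q) (n : ℕ) : qPoch q q n ≠ 0 := by
  induction n with
  | zero => simp
  | succ n ih => rw [qPoch_self_succ]; exact mul_ne_zero ih (one_sub_pow_succ_ne_zero hq n)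

lemma norm_qPoch_le (hq : ‖q‖ < 1) (x : ℂ) (n : ℕ) :
    ‖qPoch q x n‖ ≤ Real.exp (‖x‖ / (1 - ‖q‖)) := by
  calc ‖qPoch q x n‖ = ∏ i ∈ Finset.range n, ‖1 - x * q ^ i‖ := norm_prod _ _
    _ ≤ ∏ i ∈ Finset.range n, (1 + ‖x‖ * ‖q‖ ^ i) := by
      gcongr with i
      simpa using norm_sub_le 1 (x * q ^ i)
    _ ≤ Real.exp (‖x‖ / (1 - ‖q‖)) :=
      prod_one_add_mul_pow_le_exp (norm_nonneg x) (norm_nonneg q) hq n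

end Pochhammer

section GaussianBinomial

variable {q : ℂ}

lemma qBinom_of_lt {n c : ℕ} (h : n < c) : qBinom q n c = 0 := if_neg h.not_ge

lemma qBinom_of_add_eq {n c d : ℕ} (h : c + d = n) :
    qBinom q n c = qPoch q q n / (qPoch q q c * qPoch q q d) := by
  subst h
  simp [qBinom]

lemma pow_succ_mul_qBinom (q : ℂ) (n c : ℕ) :
    q ^ (n + 1) * qBinom q n c = q ^ (n - c) * q ^ (c + 1) * qBinom q n c := by
  obtain hnc | hcn := lt_or_ge n c
  · simp [qBinom_of_lt hnc]
  · rw [← pow_add, show n - c + (c + 1) = n + 1 by omega]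

lemma qBinom_zero_right (hq : ¬IsOfFinOrder q) (n : ℕ) : qBinom q n 0 = 1 := by
  simp [qBinom, qPoch_self_ne_zero hq n]

lemma one_sub_pow_mul_qBinom_succ_right (hq : ¬IsOfFinOrder q) (n c : ℕ) :
    (1 - q ^ (c + 1)) * qBinom q n (c + 1) = (1 - q ^ (n - c)) * qBinom q n c := by
  obtain hnc | hcn := le_or_gt n c
  · simp [qBinom_of_lt (Nat.lt_succ_of_le hnc), Nat.sub_eq_zero_of_le hnc]
  · obtain ⟨d, rfl⟩ := Nat.exists_eq_add_of_lt hcn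
    rw [qBinom_of_add_eq (d := d) (by omega), qBinom_of_add_eq (c := c) (d := d + 1) (by omega),
      show c + d + 1 - c = d + 1 by omega, qPoch_self_succ q c, qPoch_self_succ q d]
    have := qPoch_self_ne_zero hq c
    have := qPoch_self_ne_zero hq d
    have := one_sub_pow_succ_ne_zero hq c
    have := one_sub_pow_succ_ne_zero hq d
    field_simp

lemma one_sub_pow_mul_qBinom_succ_succ (hq : ¬IsOfFinOrder q) (n c : ℕ) :
    (1 - q ^ (c + 1)) * qBinom q (n + 1) (c + 1) = (1 - q ^ (n + 1)) * qBinom q n c := by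
  obtain hnc | hcn := lt_or_ge n c
  · simp [qBinom_of_lt hnc, qBinom_of_lt (Nat.succ_lt_succ hnc)]
  · obtain ⟨d, rfl⟩ := Nat.exists_eq_add_of_le hcn
    rw [qBinom_of_add_eq (d := d) (by omega), qBinom_of_add_eq (c := c) rfl, qPoch_self_succ q c,
      qPoch_self_succ q (c + d)]
    have := qPoch_self_ne_zero hq c
    have := qPoch_self_ne_zero hq d
    have := one_sub_pow_succ_ne_zero hq c
    field_simp

lemma qBinom_succ_succ (hq : ¬IsOfFinOrder q) (n c : ℕ) :
    qBinom q (n + 1) (c + 1) = qBinom q n (c + 1) + q ^ (n - c) * qBinom q n c := by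
  refine mul_left_cancel₀ (one_sub_pow_succ_ne_zero hq c) ?_
  linear_combination one_sub_pow_mul_qBinom_succ_succ hq n c
    - one_sub_pow_mul_qBinom_succ_right hq n c - pow_succ_mul_qBinom q n c

lemma qBinom_succ_succ' (hq : ¬IsOfFinOrder q) (n c : ℕ) :
    qBinom q (n + 1) (c + 1) = q ^ (c + 1) * qBinom q n (c + 1) + qBinom q n c := by
  refine mul_left_cancel₀ (one_sub_pow_succ_ne_zero hq c) ?_
  linear_combination one_sub_pow_mul_qBinom_succ_succ hq n c
    - q ^ (c + 1) * one_sub_pow_mul_qBinom_succ_right hq n c - pow_succ_mul_qBinom q n c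

end GaussianBinomial

section RogersRamanujan

variable {q x : ℂ}

/-- The finite Rogers–Ramanujan sum `∑_{c=0}^n q^{c²} a^c [n choose c]_q`, which is the inner sum of
the double series at `a = x²`. -/
noncomputable def rrSum (q : ℂ) (n : ℕ) (a : ℂ) : ℂ :=
  ∑ c ∈ Finset.range (n + 1), q ^ (c ^ 2) * a ^ c * qBinom q n c

lemma rrSum_zero (hq : ¬IsOfFinOrder q) (a : ℂ) : rrSum q 0 a = 1 := by
  simp [rrSum, qBinom_zero_right hq]

lemma rrSum_eq_sum_range_of_lt {n N : ℕ} (h : n < N) (a : ℂ) :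
    rrSum q n a = ∑ c ∈ Finset.range N, q ^ (c ^ 2) * a ^ c * qBinom q n c := by
  refine Finset.sum_subset (Finset.range_mono h) fun c _ hc ↦ ?_
  rw [qBinom_of_lt (by simpa using hc), mul_zero]

lemma rrSum_eq_sum_succ_add_one (hq : ¬IsOfFinOrder q) {n N : ℕ} (h : n ≤ N) (a : ℂ) :
    rrSum q n a =
      ∑ c ∈ Finset.range N, q ^ ((c + 1) ^ 2) * a ^ (c + 1) * qBinom q n (c + 1) + 1 := by
  rw [rrSum_eq_sum_range_of_lt (Nat.lt_succ_of_le h), Finset.sum_range_succ',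
    qBinom_zero_right hq]
  simp

lemma rrSum_succ (hq : ¬IsOfFinOrder q) (n : ℕ) (a : ℂ) :
    rrSum q (n + 1) a = rrSum q n a + a * q ^ (n + 1) * rrSum q n (a * q) := by
  rw [rrSum_eq_sum_succ_add_one hq le_rfl, rrSum_eq_sum_succ_add_one hq n.le_succ, rrSum,
    Finset.mul_sum, add_right_comm, ← Finset.sum_add_distrib]
  congr! 2 with c hc
  obtain ⟨d, rfl⟩ := Nat.exists_eq_add_of_le (Finset.mem_range_succ_iff.mp hc)
  rw [qBinom_succ_succ hq, Nat.add_sub_cancel_left]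
  ring

lemma rrSum_succ' (hq : ¬IsOfFinOrder q) (n : ℕ) (a : ℂ) :
    rrSum q (n + 1) a = rrSum q n (a * q) + a * q * rrSum q n (a * q ^ 2) := by
  rw [rrSum_eq_sum_succ_add_one hq le_rfl, rrSum_eq_sum_succ_add_one hq n.le_succ (a * q), rrSum,
    Finset.mul_sum, add_right_comm, ← Finset.sum_add_distrib]
  congr! 2 with c
  rw [qBinom_succ_succ' hq]
  ring

lemma norm_rrSum_le_prod (hq : ‖q‖ < 1) (n : ℕ) (a : ℂ) :
    ‖rrSum q n a‖ ≤ ∏ i ∈ Finset.range n, (1 + ‖a * q‖ * ‖q‖ ^ i) := by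
  have hfin := not_isOfFinOrder_of_norm_lt_one hq
  induction n generalizing a with
  | zero => simp [rrSum_zero hfin]
  | succ n ih =>
    have hshift : ‖rrSum q n (a * q)‖ ≤ ∏ i ∈ Finset.range n, (1 + ‖a * q‖ * ‖q‖ ^ i) := by
      refine (ih (a * q)).trans ?_
      gcongr
      rw [norm_mul (a * q)]
      exact mul_le_of_le_one_right (norm_nonneg _) hq.le
    calc ‖rrSum q (n + 1) a‖
        ≤ ‖rrSum q n a‖ + ‖a * q‖ * ‖q‖ ^ n * ‖rrSum q n (a * q)‖ := by
          rw [rrSum_succ hfin, ← norm_pow, ← norm_mul, ← norm_mul, pow_succ', ← mul_assoc a]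
          exact norm_add_le _ _
      _ ≤ ∏ i ∈ Finset.range n, (1 + ‖a * q‖ * ‖q‖ ^ i)
          + ‖a * q‖ * ‖q‖ ^ n * ∏ i ∈ Finset.range n, (1 + ‖a * q‖ * ‖q‖ ^ i) := by
          gcongr
          exact ih a
      _ = ∏ i ∈ Finset.range (n + 1), (1 + ‖a * q‖ * ‖q‖ ^ i) := by
          rw [Finset.prod_range_succ]; ring

lemma norm_rrSum_le (hq : ‖q‖ < 1) (n : ℕ) (a : ℂ) :
    ‖rrSum q n a‖ ≤ Real.exp (‖a * q‖ / (1 - ‖q‖)) :=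
  (norm_rrSum_le_prod hq n a).trans
    (prod_one_add_mul_pow_le_exp (norm_nonneg _) (norm_nonneg q) hq n)

/-- The `n`-th term (counting from `0`) of the double series, with the inner sum over `c` carried
out. -/
noncomputable def rrTerm (q x : ℂ) (n : ℕ) : ℂ :=
  qPoch q x (n + 1) * x ^ n * rrSum q (n + 1) (x ^ 2)

/-- The double series, as a function of `q` and `x`. -/
noncomputable def rrSeries (q x : ℂ) : ℂ := ∑' n, rrTerm q x n

lemma sum_range_eq_rrTerm (q x : ℂ) (n : ℕ) :
    ∑ c ∈ Finset.range (n + 2),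
      qPoch q x (n + 1) * x ^ n * q ^ (c ^ 2) * x ^ (2 * c) * qBinom q (n + 1) c
      = rrTerm q x n := by
  simp only [rrTerm, rrSum, Finset.mul_sum, pow_mul, mul_assoc]

lemma norm_rrTerm_le (hq : ‖q‖ < 1) (hx : ‖x‖ ≤ 1) (n : ℕ) :
    ‖rrTerm q x n‖ ≤ Real.exp (1 / (1 - ‖q‖)) ^ 2 * ‖x‖ ^ n := by
  have : 0 < 1 - ‖q‖ := sub_pos.mpr hq
  have hPoch : ‖qPoch q x (n + 1)‖ ≤ Real.exp (1 / (1 - ‖q‖)) :=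
    (norm_qPoch_le hq x _).trans (by gcongr)
  have hSum : ‖rrSum q (n + 1) (x ^ 2)‖ ≤ Real.exp (1 / (1 - ‖q‖)) := by
    refine (norm_rrSum_le hq _ _).trans ?_
    gcongr
    rw [norm_mul, norm_pow]
    exact mul_le_one₀ (pow_le_one₀ (norm_nonneg x) hx) (norm_nonneg q) hq.le
  calc ‖rrTerm q x n‖
      = ‖qPoch q x (n + 1)‖ * ‖rrSum q (n + 1) (x ^ 2)‖ * ‖x‖ ^ n := by
        rw [rrTerm, norm_mul, norm_mul, norm_pow, mul_right_comm]
    _ ≤ Real.exp (1 / (1 - ‖q‖)) * Real.exp (1 / (1 - ‖q‖)) * ‖x‖ ^ n := by gcongr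
    _ = Real.exp (1 / (1 - ‖q‖)) ^ 2 * ‖x‖ ^ n := by rw [sq]

lemma summable_rrTerm (hq : ‖q‖ < 1) (hx : ‖x‖ < 1) : Summable (rrTerm q x) :=
  .of_norm_bounded ((summable_geometric_of_lt_one (norm_nonneg x) hx).mul_left _)
    (norm_rrTerm_le hq hx.le)

lemma norm_rrSeries_le (hq : ‖q‖ < 1) (hx : ‖x‖ < 1) :
    ‖rrSeries q x‖ ≤ Real.exp (1 / (1 - ‖q‖)) ^ 2 * (1 - ‖x‖)⁻¹ :=
  tsum_of_norm_bounded ((hasSum_geometric_of_lt_one (norm_nonneg x) hx).mul_left _)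
    (norm_rrTerm_le hq hx.le)

lemma rrTerm_telescope (hq : ¬IsOfFinOrder q) (x : ℂ) (n : ℕ) :
    (1 - x) * (rrTerm q x n + q ^ 3 * x ^ 5 * rrTerm q (x * q) n)
      = rrTerm q x n * (1 - x ^ 2 * q ^ (n + 1))
        - rrTerm q x (n + 1) * (1 - x ^ 2 * q ^ (n + 1 + 1)) := by
  have hPoch : (1 - x) * qPoch q (x * q) (n + 1) = qPoch q x (n + 1) * (1 - x * q ^ (n + 1)) := by
    rw [← qPoch_succ', qPoch_succ]
  have hSum : x ^ 2 * q * rrSum q (n + 1) (x ^ 2 * q ^ 2)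
      = rrSum q (n + 1) (x ^ 2) - (1 - x ^ 2 * q ^ (n + 2)) * rrSum q (n + 1) (x ^ 2 * q) := by
    linear_combination rrSum_succ hq (n + 1) (x ^ 2) - rrSum_succ' hq (n + 1) (x ^ 2)
  simp only [rrTerm, mul_pow x q 2, rrSum_succ hq (n + 1), qPoch_succ q x (n + 1)]
  linear_combination
    q ^ 3 * x ^ 5 * (x * q) ^ n * rrSum q (n + 1) (x ^ 2 * q ^ 2) * hPoch
    + q ^ (n + 2) * x ^ (n + 3) * qPoch q x (n + 1) * (1 - x * q ^ (n + 1)) * hSum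

lemma rrSeries_functional_equation (hq : ‖q‖ < 1) (hx : ‖x‖ < 1) :
    rrSeries q x = 1 - q ^ 2 * x ^ 4 - q ^ 3 * x ^ 5 * rrSeries q (x * q) := by
  have hfin := not_isOfFinOrder_of_norm_lt_one hq
  have hsum := summable_rrTerm hq hx
  have hxq : ‖x * q‖ < 1 :=
    norm_mul x q ▸ mul_lt_one_of_nonneg_of_lt_one_left (norm_nonneg x) hx hq.le
  have hsum' := (summable_rrTerm hq hxq).mul_left (q ^ 3 * x ^ 5)
  have hlim : Tendsto (fun n ↦ rrTerm q x n * (1 - x ^ 2 * q ^ (n + 1))) atTop (𝓝 0) := by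
    have hpow : Tendsto (fun n ↦ q ^ (n + 1)) atTop (𝓝 0) :=
      (tendsto_pow_atTop_nhds_zero_of_norm_lt_one hq).comp (tendsto_add_atTop_nat 1)
    simpa using hsum.tendsto_atTop_zero.mul ((hpow.const_mul (x ^ 2)).const_sub 1)
  have hzero : rrTerm q x 0 = (1 - x) * (1 + q * x ^ 2) := by
    simp [rrTerm, rrSum_succ hfin, rrSum_zero hfin, qPoch_succ, mul_comm q]
  have htel : (1 - x) * (rrSeries q x + q ^ 3 * x ^ 5 * rrSeries q (x * q))
      = rrTerm q x 0 * (1 - x ^ 2 * q ^ (0 + 1)) := by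
    rw [rrSeries, rrSeries, ← tsum_mul_left, ← hsum.tsum_add hsum', ← tsum_mul_left]
    exact tsum_eq_of_eq_sub_succ ((hsum.add hsum').mul_left _) (rrTerm_telescope hfin x) hlim
  have hx1 : 1 - x ≠ 0 := sub_ne_zero.mpr fun h ↦ by simp [← h] at hx
  refine mul_left_cancel₀ hx1 ?_
  linear_combination htel + (1 - x ^ 2 * q) * hzero

end RogersRamanujan

section Theta

variable {q x : ℂ}

/-- The `n`-th term of the series in `χ₂₀⁽¹⁾`. The truncated subtractions and divisions are exact
wherever `χ₂₀⁽¹⁾ n ≠ 0`. -/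
noncomputable def thetaTerm (q x : ℂ) (n : ℕ) : ℂ :=
  (chi20_1 n : ℂ) * q ^ ((n ^ 2 - 1) / 40) * x ^ ((n - 1) / 2)

/-- The partial theta series with coefficients `χ₂₀⁽¹⁾`, as a function of `q` and `x`. -/
noncomputable def thetaSeries (q x : ℂ) : ℂ := ∑' n, thetaTerm q x n

lemma chi20_1_add_ten (n : ℕ) : chi20_1 (n + 10) = -chi20_1 n := by
  unfold chi20_1
  split_ifs <;> first | rfl | omega

lemma norm_chi20_1_le_one (n : ℕ) : ‖(chi20_1 n : ℂ)‖ ≤ 1 := by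
  unfold chi20_1
  split_ifs <;> simp

lemma mod_twenty_of_chi20_1_ne_zero {n : ℕ} (h : chi20_1 n ≠ 0) :
    n % 20 = 1 ∨ n % 20 = 9 ∨ n % 20 = 11 ∨ n % 20 = 19 := by
  unfold chi20_1 at h
  split_ifs at h <;> omega

lemma sq_mod_forty_of_chi20_1_ne_zero {n : ℕ} (h : chi20_1 n ≠ 0) : n ^ 2 % 40 = 1 := by
  have hmod := mod_twenty_of_chi20_1_ne_zero h
  have hn : n % 40 ∈ ({1, 9, 11, 19, 21, 29, 31, 39} : Finset ℕ) := by
    simp only [Finset.mem_insert, Finset.mem_singleton]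
    omega
  rw [Nat.pow_mod]
  generalize n % 40 = r at hn
  revert r
  decide

lemma thetaTerm_add_ten (q x : ℂ) (n : ℕ) :
    thetaTerm q x (n + 10) = -(q ^ 3 * x ^ 5) * thetaTerm q (x * q) n := by
  by_cases hchi : chi20_1 n = 0
  · simp [thetaTerm, chi20_1_add_ten, hchi]
  obtain ⟨d, hd⟩ : ∃ d, n = 2 * d + 1 := by
    have := mod_twenty_of_chi20_1_ne_zero hchi
    exact ⟨n / 2, by omega⟩
  obtain ⟨e, he⟩ : ∃ e, n ^ 2 = 40 * e + 1 := by
    have := sq_mod_forty_of_chi20_1_ne_zero hchi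
    exact ⟨n ^ 2 / 40, by omega⟩
  have he' : (n + 10) ^ 2 = 40 * (e + d + 3) + 1 := by linear_combination he + 20 * hd
  rw [thetaTerm, thetaTerm, chi20_1_add_ten, show (n ^ 2 - 1) / 40 = e by omega,
    show ((n + 10) ^ 2 - 1) / 40 = e + d + 3 by omega, show (n - 1) / 2 = d by omega,
    show (n + 10 - 1) / 2 = d + 5 by omega]
  push_cast
  ring

lemma norm_thetaTerm_le (hq : ‖q‖ ≤ 1) (x : ℂ) (n : ℕ) :
    ‖thetaTerm q x n‖ ≤ ‖x‖ ^ ((n - 1) / 2) := by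
  rw [thetaTerm, norm_mul, norm_mul, norm_pow, norm_pow]
  exact mul_le_of_le_one_left (by positivity)
    (mul_le_one₀ (norm_chi20_1_le_one n) (by positivity) (pow_le_one₀ (norm_nonneg q) hq))

lemma summable_thetaTerm (hq : ‖q‖ ≤ 1) (hx : ‖x‖ < 1) : Summable (thetaTerm q x) :=
  (summable_nat_add_iff 1).mp <| .of_norm_bounded
    (hasSum_pow_half (by rwa [norm_norm])).summable fun n ↦ norm_thetaTerm_le hq x (n + 1)

lemma norm_thetaSeries_le (hq : ‖q‖ ≤ 1) (hx : ‖x‖ < 1) :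
    ‖thetaSeries q x‖ ≤ (1 - ‖x‖)⁻¹ + (1 - ‖x‖)⁻¹ := by
  have hzero : thetaTerm q x 0 = 0 := by simp [thetaTerm, chi20_1]
  rw [thetaSeries, (summable_thetaTerm hq hx).tsum_eq_zero_add, hzero, zero_add]
  exact tsum_of_norm_bounded (hasSum_pow_half (by rwa [norm_norm]))
    fun n ↦ norm_thetaTerm_le hq x (n + 1)

lemma sum_range_ten_thetaTerm (q x : ℂ) :
    ∑ n ∈ Finset.range 10, thetaTerm q x n = 1 - q ^ 2 * x ^ 4 := by
  simp [Finset.sum_range_succ, thetaTerm, chi20_1, sub_eq_add_neg]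

lemma thetaSeries_functional_equation (hq : ‖q‖ ≤ 1) (hx : ‖x‖ < 1) :
    thetaSeries q x = 1 - q ^ 2 * x ^ 4 - q ^ 3 * x ^ 5 * thetaSeries q (x * q) := by
  rw [thetaSeries, ← (summable_thetaTerm hq hx).sum_add_tsum_nat_add 10, sum_range_ten_thetaTerm]
  simp only [thetaTerm_add_ten, tsum_mul_left, thetaSeries]
  ring

end Theta

lemma norm_rrSeries_sub_thetaSeries_le {q y : ℂ} (hq : ‖q‖ < 1) (hy : ‖y‖ < 1) :
    ‖rrSeries q y - thetaSeries q y‖ ≤ ‖q‖ * ‖rrSeries q (y * q) - thetaSeries q (y * q)‖ := by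
  have hcoeff : ‖q ^ 3 * y ^ 5‖ ≤ ‖q‖ := by
    rw [norm_mul, norm_pow, norm_pow]
    exact (mul_le_of_le_one_right (by positivity)
      (pow_le_one₀ (norm_nonneg y) hy.le)).trans
      (pow_le_of_le_one (norm_nonneg q) hq.le three_ne_zero)
  calc ‖rrSeries q y - thetaSeries q y‖
      = ‖q ^ 3 * y ^ 5‖ * ‖rrSeries q (y * q) - thetaSeries q (y * q)‖ := by
        rw [rrSeries_functional_equation hq hy,
          thetaSeries_functional_equation hq.le hy, sub_sub_sub_cancel_left, ← mul_sub,
          norm_mul, norm_sub_rev (thetaSeries q _)]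
    _ ≤ ‖q‖ * ‖rrSeries q (y * q) - thetaSeries q (y * q)‖ := by gcongr

theorem rrSeries_eq_thetaSeries {q x : ℂ} (hq : ‖q‖ < 1) (hx : ‖x‖ < 1) :
    rrSeries q x = thetaSeries q x := by
  have hball {y : ℂ} (hy : y ∈ Metric.closedBall 0 ‖x‖) : ‖y‖ ≤ ‖x‖ := by simpa using hy
  have hlt {y : ℂ} (hy : y ∈ Metric.closedBall 0 ‖x‖) : ‖y‖ < 1 := (hball hy).trans_lt hx
  have : 0 < 1 - ‖x‖ := sub_pos.mpr hx
  refine sub_eq_zero.mp <| eq_zero_of_norm_le_mul_norm_comp (norm_nonneg q) hq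
    (s := Metric.closedBall 0 ‖x‖) (φ := (· * q)) (f := fun y ↦ rrSeries q y - thetaSeries q y)
    (M := Real.exp (1 / (1 - ‖q‖)) ^ 2 * (1 - ‖x‖)⁻¹ + ((1 - ‖x‖)⁻¹ + (1 - ‖x‖)⁻¹))
    (fun y hy ↦ ?maps) (fun y hy ↦ ?bounded)
    (fun y hy ↦ norm_rrSeries_sub_thetaSeries_le hq (hlt hy)) x (by simp)
  case maps =>
    simpa using (mul_le_of_le_one_right (norm_nonneg y) hq.le).trans (hball hy)
  case bounded =>
    have hyx := hball hy
    calc ‖rrSeries q y - thetaSeries q y‖ ≤ ‖rrSeries q y‖ + ‖thetaSeries q y‖ := norm_sub_le _ _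
      _ ≤ Real.exp (1 / (1 - ‖q‖)) ^ 2 * (1 - ‖y‖)⁻¹ + ((1 - ‖y‖)⁻¹ + (1 - ‖y‖)⁻¹) :=
        add_le_add (norm_rrSeries_le hq (hlt hy)) (norm_thetaSeries_le hq.le (hlt hy))
      _ ≤ Real.exp (1 / (1 - ‖q‖)) ^ 2 * (1 - ‖x‖)⁻¹ + ((1 - ‖x‖)⁻¹ + (1 - ‖x‖)⁻¹) := by
        gcongr

theorem stmt_3 (q x : ℂ) (hq : ‖q‖ < 1) (hx : ‖x‖ < 1) :
    Summable (fun n : ℕ => ∑ c ∈ Finset.range (n + 2),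
      qPoch q x (n + 1) * x ^ n * q ^ (c ^ 2) * x ^ (2 * c) * qBinom q (n + 1) c) ∧
    Summable (fun n : ℕ =>
      (chi20_1 n : ℂ) * q ^ ((n ^ 2 - 1) / 40) * x ^ ((n - 1) / 2)) ∧
    ∑' n : ℕ, ∑ c ∈ Finset.range (n + 2),
        qPoch q x (n + 1) * x ^ n * q ^ (c ^ 2) * x ^ (2 * c) * qBinom q (n + 1) c
      = ∑' n : ℕ, (chi20_1 n : ℂ) * q ^ ((n ^ 2 - 1) / 40) * x ^ ((n - 1) / 2) := by
  simp only [sum_range_eq_rrTerm]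
  exact ⟨summable_rrTerm hq hx, summable_thetaTerm hq.le hx, rrSeries_eq_thetaSeries hq hx⟩
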